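/- Let φ : (0,∞)^d → ℝ (or ℝ^d ⊇ open set U → ℝ) be defined by φ(s) = ∫ w(t) exp(sᵀ t) dν(t) for an integrable function w. If φ(s) = 0 for all s in a nonempty open set U ⊆ ℝ^d on which the integral converges absolutely, then w = 0 ν-almost everywhere. -/

import Mathlib

open MeasureTheory

open ProbabilityTheory Filter Topology in
/-- Identity theorem for complex moment generating functions: agreement of the real moment
generating functions near `0` gives agreement of the complex ones at `I`. -/
lemma complexMGF_I_eq_of_mgf_eventuallyEq {Ω : Type*} [MeasurableSpace Ω]
    {X : Ω → ℝ} {μ μ' : Measure Ω}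
    (h1 : ∀ᶠ x in 𝓝 (0 : ℝ), Integrable (fun ω => Real.exp (x * X ω)) μ)
    (h2 : ∀ᶠ x in 𝓝 (0 : ℝ), Integrable (fun ω => Real.exp (x * X ω)) μ')
    (h : ∀ᶠ x in 𝓝 (0 : ℝ), mgf X μ x = mgf X μ' x) :
    complexMGF X μ Complex.I = complexMGF X μ' Complex.I := by
  have m1 : (0 : ℝ) ∈ interior (integrableExpSet X μ) := mem_interior_iff_mem_nhds.2 h1
  have m2 : (0 : ℝ) ∈ interior (integrableExpSet X μ') := mem_interior_iff_mem_nhds.2 h2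
  have hX : AnalyticOnNhd ℂ (complexMGF X μ)
      {z | z.re ∈ interior (integrableExpSet X μ) ∩ interior (integrableExpSet X μ')} :=
    analyticOnNhd_complexMGF.mono fun z hz => hz.1
  have hY : AnalyticOnNhd ℂ (complexMGF X μ')
      {z | z.re ∈ interior (integrableExpSet X μ) ∩ interior (integrableExpSet X μ')} :=
    analyticOnNhd_complexMGF.mono fun z hz => hz.2
  refine AnalyticOnNhd.eqOn_of_preconnected_of_frequently_eq hX hY
    ((convex_integrableExpSet.interior.inter
      convex_integrableExpSet.interior).linear_preimage Complex.reLm).isPreconnected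
    (z₀ := ((0 : ℝ) : ℂ)) (by simp [m1, m2]) ?_ (by simp [m1, m2])
  have h_real : ∃ᶠ (x : ℝ) in 𝓝[≠] 0, complexMGF X μ x = complexMGF X μ' x := by
    refine Eventually.frequently ?_
    filter_upwards [h.filter_mono nhdsWithin_le_nhds] with y hy
    rw [complexMGF_ofReal, complexMGF_ofReal, hy]
  rw [frequently_iff_seq_forall] at h_real ⊢
  obtain ⟨xs, hx_tendsto, hx_eq⟩ := h_real
  refine ⟨fun n ↦ xs n, ?_, fun n ↦ ?_⟩
  · rw [tendsto_nhdsWithin_iff] at hx_tendsto ⊢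
    constructor
    · refine (Complex.continuous_ofReal.tendsto 0).comp ?_
      exact hx_tendsto.1
    · simpa using hx_tendsto.2
  · simp [hx_eq]

open ProbabilityTheory Filter Topology in
/-- injectivity of the multivariate Laplace transform.  If
`φ(s) = ∫ w(t) exp(sᵀ t) dν(t)` converges absolutely and vanishes for all `s` in a
nonempty open set `U ⊆ ℝ^d`, then `w = 0` ν-almost everywhere. -/
theorem laplace_transform_injective
    {d : ℕ} (ν : Measure (Fin d → ℝ)) [SigmaFinite ν]
    (w : (Fin d → ℝ) → ℝ) (hw : Measurable w)
    (U : Set (Fin d → ℝ)) (hU : IsOpen U) (hUne : U.Nonempty)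
    (hint : ∀ s ∈ U, Integrable (fun t => w t * Real.exp (∑ i, s i * t i)) ν)
    (hzero : ∀ s ∈ U, ∫ t, w t * Real.exp (∑ i, s i * t i) ∂ν = 0) :
    w =ᵐ[ν] 0 := by

  obtain ⟨s, hs⟩ := hUne
  set f : (Fin d → ℝ) → ℝ := fun t => w t * Real.exp (∑ i, s i * t i) with hf
  have hfm : Measurable f := by fun_prop
  have hfi : Integrable f ν := hint s hs
  have hp : Measurable fun t => ENNReal.ofReal (f t) := hfm.ennreal_ofReal
  have hn : Measurable fun t => ENNReal.ofReal (- f t) := hfm.neg.ennreal_ofReal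
  set μ := ν.withDensity fun t => ENNReal.ofReal (f t) with hμ
  set μ' := ν.withDensity fun t => ENNReal.ofReal (- f t) with hμ'
  have : IsFiniteMeasure μ := isFiniteMeasure_withDensity_ofReal hfi.2
  have : IsFiniteMeasure μ' := isFiniteMeasure_withDensity_ofReal hfi.neg.2
  have key : μ = μ' := by
    refine Measure.ext_of_charFunDual (funext fun L => ?_)
    let u : Fin d → ℝ := fun i => L (Pi.single i 1)
    have hL : ∀ t, L t = ∑ i, u i * t i := by
      intro t
      conv_lhs => rw [pi_eq_sum_univ' t]
      simp [u, mul_comm]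
    have hev : ∀ᶠ x in 𝓝 (0 : ℝ), s + x • u ∈ U := by
      have hc : ContinuousAt (fun x : ℝ => s + x • u) 0 := by fun_prop
      exact hc.eventually_mem (by simpa using hU.mem_nhds hs)
    have hmul : ∀ (x : ℝ) t, f t * Real.exp (x * L t)
        = w t * Real.exp (∑ i, (s + x • u) i * t i) := by
      intro x t
      simp only [hf, mul_assoc, ← Real.exp_add, hL, Finset.mul_sum, ← Finset.sum_add_distrib]
      congr 3 with i
      simp; ring
    have hpp : ∀ x t : ℝ, ∀ a : ℝ, (ENNReal.ofReal a).toReal • Real.exp (x * t)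
        = max (a * Real.exp (x * t)) 0 := by
      intro x t a
      rw [ENNReal.toReal_ofReal', smul_eq_mul, max_mul_of_nonneg _ _ (Real.exp_pos _).le, zero_mul]
    have hI : ∀ᶠ x in 𝓝 (0 : ℝ), Integrable (fun t => f t * Real.exp (x * L t)) ν := by
      filter_upwards [hev] with x hx
      simp_rw [hmul]
      exact hint _ hx
    have h1 : ∀ᶠ x in 𝓝 (0 : ℝ), Integrable (fun ω => Real.exp (x * L ω)) μ := by
      filter_upwards [hI] with x hx
      rw [hμ, integrable_withDensity_iff_integrable_smul' hp (by simp)]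
      simp_rw [hpp]
      exact hx.pos_part
    have h2 : ∀ᶠ x in 𝓝 (0 : ℝ), Integrable (fun ω => Real.exp (x * L ω)) μ' := by
      filter_upwards [hI] with x hx
      rw [hμ', integrable_withDensity_iff_integrable_smul' hn (by simp)]
      simp_rw [hpp, neg_mul]
      exact hx.neg_part
    have h3 : ∀ᶠ x in 𝓝 (0 : ℝ), mgf L μ x = mgf L μ' x := by
      filter_upwards [hI, hev] with x hx hxU
      rw [mgf, mgf, hμ, hμ', integral_withDensity_eq_integral_toReal_smul hp (by simp),
        integral_withDensity_eq_integral_toReal_smul hn (by simp)]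
      simp_rw [hpp, neg_mul]
      rw [← sub_eq_zero, ← integral_sub hx.pos_part hx.neg_part]
      refine Eq.trans ?_ (hzero _ hxU)
      refine integral_congr_ae (ae_of_all _ fun t => ?_)
      simp only [← hmul]
      exact max_zero_sub_max_neg_zero_eq_self (f t * Real.exp (x * L t))
    have := complexMGF_I_eq_of_mgf_eventuallyEq h1 h2 h3
    simpa [complexMGF, charFunDual_apply, mul_comm] using this
  have hae := (withDensity_eq_iff_of_sigmaFinite hp.aemeasurable hn.aemeasurable).1 key
  filter_upwards [hae] with t ht
  have h0 : f t = 0 := by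
    rcases le_total 0 (f t) with h | h
    · rw [ENNReal.ofReal_of_nonpos (neg_nonpos.2 h), ENNReal.ofReal_eq_zero] at ht
      exact le_antisymm ht h
    · rw [ENNReal.ofReal_of_nonpos h, eq_comm, ENNReal.ofReal_eq_zero] at ht
      linarith
  simpa [hf, (Real.exp_pos _).ne'] using h0
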